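/- Let (X, d) be a metric space and let H be a subgroup of the group of bijective isometries of X. Assume H acts cocompactly: there is a compact set K ⊆ X such that for every x ∈ X there exists h ∈ H with h(x) ∈ K. Assume there exist a real number λ with 0 < λ < 1 and a bijection p : X → X satisfying d(p(x), p(y)) = λ · d(x, y) for all x, y ∈ X, which normalizes H in the sense that for every h ∈ H there is h' ∈ H with p(h(x)) = h'(p(x)) for all x ∈ X. Then for every y ∈ X the orbit {h(y) : h ∈ H} is dense in X. In particular, if in addition every H-orbit is a closed subset of X, then H acts transitively on X. -/

import Mathlib

/-!
Cocompactness gives a constant `C`, the diameter of `K`, such that every orbit comes within `C` of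
every point. Given `x` and `y`, pull both back by `p`, move the preimage of `y` close to the
preimage of `x` by an element of `H`, and push forward again: since `p` normalizes `H`, the result
lies in the orbit of `y`, and its distance to `x` has been multiplied by `lam`
(`approx_contract`). Iterating, every orbit comes within `lam ^ n * C` of every point for all `n`,
hence is dense.
-/

/-- The contraction step: if every orbit is `r`-dense, then every orbit is `lam * r`-dense. -/
theorem approx_contract {X : Type*} [MetricSpace X] (H : Subgroup (X ≃ᵢ X))
    (lam : ℝ) (hlam0 : 0 < lam) (p : X ≃ X)
    (hp : ∀ x y : X, dist (p x) (p y) = lam * dist x y)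
    (hnorm : ∀ h ∈ H, ∃ h' ∈ H, ∀ x : X, p (h x) = h' (p x))
    (r : ℝ) (hr : ∀ x y : X, ∃ h ∈ H, dist (h y) x ≤ r) (x y : X) :
    ∃ h ∈ H, dist (h y) x ≤ lam * r := by
  obtain ⟨h, hh, hd⟩ := hr (p.symm x) (p.symm y)
  obtain ⟨h', hh', heq⟩ := hnorm h hh
  refine ⟨h', hh', ?_⟩
  have key := hp (h (p.symm y)) (p.symm x)
  rw [heq, p.apply_symm_apply, p.apply_symm_apply] at key
  rw [key]
  exact mul_le_mul_of_nonneg_left hd hlam0.le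

/-- If a group `H` of isometries of a metric space `X` acts cocompactly and is normalized by a
contracting similarity `p` of ratio `0 < λ < 1`, then every `H`-orbit is dense; in particular,
if moreover every `H`-orbit is closed, then `H` acts transitively on `X`. -/
theorem stmt_4 {X : Type*} [MetricSpace X] (H : Subgroup (X ≃ᵢ X))
    (hcocompact : ∃ K : Set X, IsCompact K ∧ ∀ x : X, ∃ h ∈ H, h x ∈ K)
    (lam : ℝ) (hlam0 : 0 < lam) (hlam1 : lam < 1) (p : X ≃ X)
    (hp : ∀ x y : X, dist (p x) (p y) = lam * dist x y)
    (hnorm : ∀ h ∈ H, ∃ h' ∈ H, ∀ x : X, p (h x) = h' (p x)) :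
    (∀ y : X, Dense {x : X | ∃ h ∈ H, h y = x}) ∧
      ((∀ y : X, IsClosed {x : X | ∃ h ∈ H, h y = x}) →
        ∀ x y : X, ∃ h ∈ H, h x = y) := by
  obtain ⟨K, hK, hcov⟩ := hcocompact
  have base : ∀ x y : X, ∃ h ∈ H, dist (h y) x ≤ Metric.diam K := by
    intro x y
    obtain ⟨a, ha, hax⟩ := hcov x
    obtain ⟨b, hb, hby⟩ := hcov y
    refine ⟨a⁻¹ * b, H.mul_mem (H.inv_mem ha) hb, ?_⟩
    rw [← a.dist_eq, IsometryEquiv.mul_apply, IsometryEquiv.apply_inv_self]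
    exact Metric.dist_le_diam_of_mem hK.isBounded hby hax
  have iter : ∀ (n : ℕ) (x y : X), ∃ h ∈ H, dist (h y) x ≤ lam ^ n * Metric.diam K := by
    intro n
    induction n with
    | zero => simpa using base
    | succ n ih =>
      rw [pow_succ', mul_assoc]
      exact approx_contract H lam hlam0 p hp hnorm _ ih
  have dense : ∀ y : X, Dense {x : X | ∃ h ∈ H, h y = x} := by
    intro y x
    rw [Metric.mem_closure_iff]
    intro ε hε
    have hlim : Filter.Tendsto (fun n : ℕ => lam ^ n * Metric.diam K) Filter.atTop (nhds 0) := by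
      simpa using (tendsto_pow_atTop_nhds_zero_of_lt_one hlam0.le hlam1).mul_const (Metric.diam K)
    obtain ⟨n, hn⟩ := (hlim.eventually_lt_const hε).exists
    obtain ⟨h, hh, hd⟩ := iter n x y
    exact ⟨h y, ⟨h, hh, rfl⟩, by rw [dist_comm]; exact hd.trans_lt hn⟩
  refine ⟨dense, fun hclosed x y => ?_⟩
  have hy := dense x y
  rwa [(hclosed x).closure_eq] at hy
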